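/- arXiv:1805.07786 — 3 statements merged into one kernel-verified Lean document; each statement's English description precedes it below -/
import Mathlib

section
/- Let n ≥ 1 be an integer and let μ, L be reals with 0 < μ ≤ L. Set κ = L/μ, m = n + 121κ, and η = √(κ/m)/(2L). Then the Prox-SVRG convergence factor ρ = (1 + μη(1 + 4mLη)) / (μηm(1 − 4Lη)) satisfies ρ ≤ 10·√(κ/m) = √(100/(121 + n/κ)). (In particular 4Lη = 2√(κ/m) ≤ 2/11 < 1, so the denominator is positive.) -/
/-!
Put `κ = L / μ` and `s = √(κ / m)`. For the step size `η = s / (2L)` we have `4Lη = 2s` and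
`μη · 4mLη = m s² / κ = 1`, so the convergence factor collapses to
`ρ = s (4 + s / κ) / (1 - 2s)`. Hence `ρ ≤ 10 s` amounts to `4 + s / κ ≤ 10 (1 - 2s)`, and
`m ≥ 121κ` makes `s ≤ 1 / 11`, which leaves ample room when `κ ≥ 1`.
-/

/-- The factor `ρ` by which an epoch of Prox-SVRG contracts the expected objective gap, for strong
convexity constant `μ`, Lipschitz constant `L`, expected epoch length `m` and step size `η`. The
epoch length is a real number, and the factor is meaningful only for `0 < μ * η * m` and
`4 * L * η < 1`. -/
noncomputable def proxSVRGFactor (μ L m η : ℝ) : ℝ :=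
  (1 + μ * η * (1 + 4 * m * L * η)) / (μ * η * m * (1 - 4 * L * η))

section Factor

variable {μ L m s : ℝ}

theorem proxSVRGFactor_div_two_mul (hμ : μ ≠ 0) (hL : L ≠ 0) (hs : m * s ^ 2 = L / μ) :
    proxSVRGFactor μ L m (s / (2 * L)) = s * (4 + s / (L / μ)) / (1 - 2 * s) := by
  have hs₀ : s ≠ 0 := by
    rintro rfl
    exact div_ne_zero hL hμ (by simpa using hs.symm)
  have hm : m = L / (μ * s ^ 2) := by
    rw [eq_div_iff (by positivity), mul_left_comm, hs, mul_div_cancel₀ _ hμ]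
  have hnum : 1 + μ * (s / (2 * L)) * (1 + 4 * m * L * (s / (2 * L))) =
      (4 + s / (L / μ)) / 2 := by
    rw [hm]
    field_simp
    ring
  have hden : μ * (s / (2 * L)) * m = 1 / (2 * s) := by
    rw [hm]
    field_simp
  have hstep : 4 * L * (s / (2 * L)) = 2 * s := by
    field_simp
    norm_num
  rw [proxSVRGFactor, hnum, hden, hstep]
  field_simp

theorem proxSVRGFactor_le_mul_iff {C : ℝ} (hμ : μ ≠ 0) (hL : L ≠ 0) (hs : m * s ^ 2 = L / μ)
    (hs_pos : 0 < s) (hs_lt : s < 1 / 2) :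
    proxSVRGFactor μ L m (s / (2 * L)) ≤ C * s ↔ 4 + s / (L / μ) ≤ C * (1 - 2 * s) := by
  rw [proxSVRGFactor_div_two_mul hμ hL hs, div_le_iff₀ (by linarith), mul_comm C s, mul_assoc,
    mul_le_mul_iff_right₀ hs_pos]

end Factor

section Sqrt

variable {a c n κ : ℝ}

theorem sqrt_div_add_sq_mul_le_inv (hκ : 0 ≤ κ) (hn : 0 ≤ n) (hc : 0 < c) :
    √(κ / (n + c ^ 2 * κ)) ≤ c⁻¹ := by
  refine Real.sqrt_le_iff.2 ⟨by positivity, div_le_of_le_mul₀ (by positivity) (by positivity) ?_⟩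
  calc κ = c⁻¹ ^ 2 * (c ^ 2 * κ) := by field_simp
    _ ≤ c⁻¹ ^ 2 * (n + c ^ 2 * κ) := by gcongr; linarith

theorem mul_sqrt_div_add_mul (ha : 0 ≤ a) (hκ : κ ≠ 0) :
    a * √(κ / (n + c * κ)) = √(a ^ 2 / (c + n / κ)) := by
  have hfactor : n + c * κ = κ * (c + n / κ) := by
    field_simp
    ring
  rw [hfactor, div_mul_cancel_left₀ hκ, div_eq_mul_inv (a ^ 2), Real.sqrt_mul (sq_nonneg a),
    Real.sqrt_sq ha]

end Sqrt

/-- The constant `46` is optimal: for `n = 0` and `μ = 46 * L` the first bound is an equality. -/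
theorem prox_svrg_rate_bound_general {n μ L : ℝ} (hn : 0 ≤ n) (hμ : 0 < μ) (hμL : μ ≤ 46 * L) :
    let κ : ℝ := L / μ
    let m : ℝ := n + 121 * κ
    proxSVRGFactor μ L m (√(κ / m) / (2 * L)) ≤ 10 * √(κ / m) ∧
      10 * √(κ / m) = √(100 / (121 + n / κ)) := by
  intro κ m
  have hL : 0 < L := by linarith
  have hκ : 0 < κ := div_pos hL hμ
  have hm : 0 < m := by positivity
  have hs_pos : 0 < √(κ / m) := by positivity
  have hs_le : √(κ / m) ≤ 1 / 11 := by
    convert sqrt_div_add_sq_mul_le_inv hκ.le hn (c := 11) (by norm_num) using 1 <;> norm_num [m]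
  have hs_sq : m * √(κ / m) ^ 2 = κ := by
    rw [Real.sq_sqrt (by positivity), mul_div_cancel₀ _ hm.ne']
  have hs_div : √(κ / m) / κ ≤ 46 / 11 := by
    have hκ_ge : 1 / 46 ≤ κ := (le_div_iff₀ hμ).2 (by linarith)
    exact (div_le_iff₀ hκ).2 (by linarith)
  have hfactor : 4 + √(κ / m) / κ ≤ 10 * (1 - 2 * √(κ / m)) := by linarith
  constructor
  · exact (proxSVRGFactor_le_mul_iff hμ.ne' hL.ne' hs_sq hs_pos (by linarith)).2 hfactor
  · convert mul_sqrt_div_add_mul (a := 10) (c := 121) (n := n) (by norm_num) hκ.ne' using 3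
    norm_num

/-- Corollary 2 of the paper (rate bound for Prox-SVRG with m = n + 121κ and
η = √(κ/m)/(2L)): the per-epoch factor ρ satisfies ρ ≤ 10√(κ/m) = √(100/(121 + n/κ)). -/
theorem prox_svrg_rate_bound (n : ℕ) (hn : 1 ≤ n) (μ L : ℝ) (hμ : 0 < μ) (hμL : μ ≤ L) :
    let κ : ℝ := L / μ
    let m : ℝ := (n : ℝ) + 121 * κ
    let η : ℝ := Real.sqrt (κ / m) / (2 * L)
    let ρ : ℝ := (1 + μ * η * (1 + 4 * m * L * η)) / (μ * η * m * (1 - 4 * L * η))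
    ρ ≤ 10 * Real.sqrt (κ / m) ∧
      10 * Real.sqrt (κ / m) = Real.sqrt (100 / (121 + (n : ℝ) / κ)) :=
  prox_svrg_rate_bound_general n.cast_nonneg hμ (by linarith)
end

section
/- Let n ≥ 1 be an integer and let c > 0, μ > 0 be reals. Let J be the n×n all-ones real matrix, Y = c·(n²·I + J), and define D : ℝⁿ → ℝ by D(α) = ‖Yα‖²/(2μn²) + ‖α‖²/(2n). Fix an index i and a vector α ∈ ℝⁿ, and set β = (c² + 2c²n)/(c²n³ + 2c²n + c² + μ) and z* = −β · Σ_{j ≠ i} α_j. Then the function z ↦ D(α with its i-th coordinate replaced by z) is minimized at z = z*: for every real z, D(update α i z*) ≤ D(update α i z). -/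
/-! Write `D v = v ⬝ᵥ M *ᵥ v` with `M` symmetric. Since
`D (w + t eᵢ) = D w + 2 t (M *ᵥ w) i + t² M i i` and `0 ≤ M i i`, the first-order condition
`(M *ᵥ w) i = 0` already makes `w` minimal along its `i`-th coordinate. As `J² = n J`, the matrix
`M` for `Y = c (n² I + J)` is a combination `a I + b J`, and the condition reads
`a wᵢ + b ∑ⱼ wⱼ = 0`, that is, `wᵢ = -(b / (a + b)) ∑_{j ≠ i} wⱼ`. -/

section QuadraticForm

open Matrix

variable {m ι R : Type*} [Fintype m] [Fintype ι]

theorem sum_sq_mulVec_eq_dotProduct [CommSemiring R] (Y : Matrix m ι R) (v : ι → R) :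
    ∑ j, (Y *ᵥ v) j ^ 2 = v ⬝ᵥ (Yᵀ * Y) *ᵥ v := by
  rw [← mulVec_mulVec, dotProduct_transpose_mulVec]
  simp only [dotProduct, sq]

theorem sum_sq_mulVec_div_add_sum_sq_div_eq_dotProduct [DecidableEq ι] [Semifield R]
    (Y : Matrix m ι R) (s t : R) (v : ι → R) :
    (∑ j, (Y *ᵥ v) j ^ 2) / s + (∑ j, v j ^ 2) / t =
      v ⬝ᵥ (s⁻¹ • (Yᵀ * Y) + t⁻¹ • (1 : Matrix ι ι R)) *ᵥ v := by
  have sum_sq_eq : ∑ j, v j ^ 2 = v ⬝ᵥ v := by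
    simp only [dotProduct, sq]
  rw [sum_sq_mulVec_eq_dotProduct, sum_sq_eq, add_mulVec, smul_mulVec, smul_mulVec, one_mulVec,
    dotProduct_add, dotProduct_smul, dotProduct_smul, smul_eq_mul, smul_eq_mul,
    div_eq_inv_mul, div_eq_inv_mul]

theorem dotProduct_mulVec_add_single [DecidableEq ι] [CommRing R] {M : Matrix ι ι R}
    (hM : M.IsSymm) (w : ι → R) (i : ι) (t : R) :
    (w + Pi.single i t) ⬝ᵥ M *ᵥ (w + Pi.single i t) =
      w ⬝ᵥ M *ᵥ w + 2 * t * (M *ᵥ w) i + t ^ 2 * M i i := by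
  have cross : w ⬝ᵥ M *ᵥ Pi.single i t = t * (M *ᵥ w) i := by
    rw [← dotProduct_transpose_mulVec, hM.eq, single_dotProduct]
  have diag : (M *ᵥ Pi.single i t) i = M i i * t := dotProduct_single _ _ _
  rw [mulVec_add, dotProduct_add, add_dotProduct, add_dotProduct, cross, single_dotProduct,
    single_dotProduct, diag]
  ring

theorem dotProduct_mulVec_le_update_of_mulVec_eq_zero [DecidableEq ι] [CommRing R] [LinearOrder R]
    [IsStrictOrderedRing R] {M : Matrix ι ι R} (hM : M.IsSymm) {i : ι} (hii : 0 ≤ M i i)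
    {w : ι → R} (hw : (M *ᵥ w) i = 0) (z : R) :
    w ⬝ᵥ M *ᵥ w ≤ Function.update w i z ⬝ᵥ M *ᵥ Function.update w i z := by
  have update_eq : Function.update w i z = w + Pi.single i (z - w i) := by
    ext j
    rcases eq_or_ne j i with rfl | hj <;> simp [*]
  rw [update_eq, dotProduct_mulVec_add_single hM, hw, mul_zero, add_zero]
  exact le_add_of_nonneg_right (mul_nonneg (sq_nonneg _) hii)

end QuadraticForm

section AllOnes

open Matrix

/-- The all-ones matrix, the `J` of `Y = c (n² I + J)`. The index type and the ring of entries are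
explicit because no other argument determines them. -/
def allOnes (ι R : Type*) [One R] : Matrix ι ι R :=
  Matrix.of fun _ _ => 1

variable {ι R : Type*}

theorem isSymm_allOnes [One R] : (allOnes ι R).IsSymm :=
  rfl

theorem isSymm_smul_one_add_smul_allOnes [DecidableEq ι] [Semiring R] (a b : R) :
    (a • (1 : Matrix ι ι R) + b • allOnes ι R).IsSymm :=
  (isSymm_one.smul a).add (isSymm_allOnes.smul b)

variable [Fintype ι]

theorem allOnes_mul_allOnes [NonAssocSemiring R] :
    allOnes ι R * allOnes ι R = (Fintype.card ι : R) • allOnes ι R := by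
  ext j k
  simp [allOnes, mul_apply]

theorem allOnes_mulVec [NonAssocSemiring R] (v : ι → R) (i : ι) :
    (allOnes ι R *ᵥ v) i = ∑ j, v j := by
  simp [allOnes, mulVec, dotProduct]

variable [DecidableEq ι]

theorem smul_one_add_smul_allOnes_mul_self [CommRing R] (a b : R) :
    (a • (1 : Matrix ι ι R) + b • allOnes ι R) * (a • (1 : Matrix ι ι R) + b • allOnes ι R) =
      a ^ 2 • (1 : Matrix ι ι R) + (2 * a * b + Fintype.card ι * b ^ 2) • allOnes ι R := by
  simp only [add_mul, mul_add, smul_mul_assoc, mul_smul_comm, one_mul, mul_one, allOnes_mul_allOnes]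
  module

theorem smul_one_add_smul_allOnes_mulVec [Semiring R] (a b : R) (v : ι → R) (i : ι) :
    ((a • (1 : Matrix ι ι R) + b • allOnes ι R) *ᵥ v) i = a * v i + b * ∑ j, v j := by
  simp only [add_mulVec, smul_mulVec, one_mulVec, Pi.add_apply, Pi.smul_apply, smul_eq_mul,
    allOnes_mulVec]

theorem smul_one_add_smul_allOnes_mulVec_update_eq_zero [Field R] {a b : R} (hab : a + b ≠ 0)
    (α : ι → R) (i : ι) :
    ((a • (1 : Matrix ι ι R) + b • allOnes ι R) *ᵥ
      Function.update α i (-(b / (a + b)) * ∑ j ∈ Finset.univ.erase i, α j)) i = 0 := by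
  rw [smul_one_add_smul_allOnes_mulVec, Function.update_self,
    Finset.sum_update_of_mem (Finset.mem_univ i), Finset.sdiff_singleton_eq_erase]
  field_simp
  ring

theorem dotProduct_smul_one_add_smul_allOnes_mulVec_update_le [Field R] [LinearOrder R]
    [IsStrictOrderedRing R] {a b : R} (hab : 0 < a + b) (α : ι → R) (i : ι) (z : R) :
    let M := a • (1 : Matrix ι ι R) + b • allOnes ι R
    let w := Function.update α i (-(b / (a + b)) * ∑ j ∈ Finset.univ.erase i, α j)
    w ⬝ᵥ M *ᵥ w ≤ Function.update α i z ⬝ᵥ M *ᵥ Function.update α i z := by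
  intro M w
  have diag_nonneg : 0 ≤ M i i := by
    simpa [M, allOnes] using hab.le
  simpa only [w, Function.update_idem] using
    dotProduct_mulVec_le_update_of_mulVec_eq_zero
      (isSymm_smul_one_add_smul_allOnes a b) diag_nonneg
      (smul_one_add_smul_allOnes_mulVec_update_eq_zero hab.ne' α i) z

end AllOnes

/-- Coordinate-minimization step in the proof of Proposition 1 (SDCA lower
bound): for the dual objective D(α) = ‖Yα‖²/(2μn²) + ‖α‖²/(2n) with
Y = c(n²I + J), the minimizer over the i-th coordinate is
z* = −β ∑_{j≠i} α_j with β = (c² + 2c²n)/(c²n³ + 2c²n + c² + μ). -/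
theorem sdca_coordinate_minimization (n : ℕ) (hn : 1 ≤ n) (c μ : ℝ)
    (hc : 0 < c) (hμ : 0 < μ) (i : Fin n) (α : Fin n → ℝ) :
    let J : Matrix (Fin n) (Fin n) ℝ := Matrix.of fun _ _ => 1
    let Y : Matrix (Fin n) (Fin n) ℝ := c • ((n : ℝ) ^ 2 • (1 : Matrix (Fin n) (Fin n) ℝ) + J)
    let D : (Fin n → ℝ) → ℝ := fun v =>
      (∑ j, (Y.mulVec v j) ^ 2) / (2 * μ * (n : ℝ) ^ 2) + (∑ j, (v j) ^ 2) / (2 * (n : ℝ))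
    let β : ℝ := (c ^ 2 + 2 * c ^ 2 * n) / (c ^ 2 * (n : ℝ) ^ 3 + 2 * c ^ 2 * n + c ^ 2 + μ)
    let zstar : ℝ := -β * ∑ j ∈ Finset.univ.erase i, α j
    ∀ z : ℝ, D (Function.update α i zstar) ≤ D (Function.update α i z) := by
  intro J Y D β zstar z
  have : (0 : ℝ) < n := by exact_mod_cast hn
  let a : ℝ := (c ^ 2 * n ^ 3 + μ) / (2 * μ * n)
  let b : ℝ := c ^ 2 * (2 * n + 1) / (2 * μ * n)
  let M : Matrix (Fin n) (Fin n) ℝ := a • 1 + b • allOnes (Fin n) ℝ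
  have hY : Y = (c * n ^ 2) • 1 + c • allOnes (Fin n) ℝ := by
    rw [mul_smul, ← smul_add]
    rfl
  have hM : (2 * μ * (n : ℝ) ^ 2)⁻¹ • (Y.transpose * Y) + (2 * (n : ℝ))⁻¹ • 1 = M := by
    rw [hY, (isSymm_smul_one_add_smul_allOnes _ _).eq, smul_one_add_smul_allOnes_mul_self,
      Fintype.card_fin]
    simp only [M, a, b]
    match_scalars <;> field_simp
  have hD (v : Fin n → ℝ) : D v = v ⬝ᵥ M.mulVec v := by
    rw [← hM, ← sum_sq_mulVec_div_add_sum_sq_div_eq_dotProduct]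
  have hβ : β = b / (a + b) := by
    simp only [β, a, b]
    field_simp
    ring
  simp only [hD, zstar, hβ]
  exact dotProduct_smul_one_add_smul_allOnes_mulVec_update_le (by positivity) α i z
end

section
/- Let τ > 0 and c ≥ 0 be reals and let a, b : ℕ → ℝ be sequences with a_j ≥ 0 and b_j ≥ 0 for all j, satisfying 2(1 + τ)·a_{j+1} − a_j ≤ c·(b_j − (1 + τ)·b_{j+1}) for every j. Then for every k, (1 + τ)^k · a_k ≤ a_0 + c·b_0. In particular, if additionally c·b_0 ≤ (1 + 1/(2τ))·a_0, then (1 + τ)^k · a_k ≤ (2 + 1/(2τ))·a_0 for every k. -/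
/-! Since `(1 + τ) a_{j+1} ≥ 0`, one of the two copies of it in the recursion can be dropped. What
remains says that the potential `a_j + c b_j` shrinks by a factor `1 + τ` at each step, so that
`(1 + τ)^j (a_j + c b_j)` is antitone. -/

theorem antitone_pow_mul_of_mul_succ_le {R : Type*} [Semiring R] [PartialOrder R]
    [IsOrderedRing R] {q : R} {u : ℕ → R} (hq : 0 ≤ q) (hu : ∀ j, q * u (j + 1) ≤ u j) :
    Antitone fun k ↦ q ^ k * u k :=
  antitone_nat_of_succ_le fun k ↦ calc
    q ^ (k + 1) * u (k + 1) = q ^ k * (q * u (k + 1)) := by rw [pow_succ, mul_assoc]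
    _ ≤ q ^ k * u k := mul_le_mul_of_nonneg_left (hu k) (pow_nonneg hq k)

theorem mul_add_le_add_of_two_mul_sub_le {R : Type*} [Ring R] [PartialOrder R]
    [IsOrderedAddMonoid R] {q a a' b b' : R} (hqa' : 0 ≤ q * a')
    (h : 2 * q * a' - a ≤ b - q * b') :
    q * (a' + b') ≤ a + b := calc
  q * (a' + b') ≤ q * (a' + b') + q * a' := le_add_of_nonneg_right hqa'
  _ = (2 * q * a' - a) + (a + q * b') := by noncomm_ring
  _ ≤ (b - q * b') + (a + q * b') := add_le_add_left h _
  _ = a + b := by abel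

theorem svrg_telescoping_general {R : Type*} [CommRing R] [PartialOrder R] [IsOrderedRing R]
    {τ c : R} {a b : ℕ → R} (hτ : 0 ≤ 1 + τ) (ha : ∀ j, 0 ≤ a j) (hcb : ∀ j, 0 ≤ c * b j)
    (h : ∀ j, 2 * (1 + τ) * a (j + 1) - a j ≤ c * (b j - (1 + τ) * b (j + 1))) :
    (∀ k, (1 + τ) ^ k * a k ≤ a 0 + c * b 0) ∧
      ∀ D, c * b 0 ≤ D * a 0 → ∀ k, (1 + τ) ^ k * a k ≤ (1 + D) * a 0 := by
  have contraction (j : ℕ) : (1 + τ) * (a (j + 1) + c * b (j + 1)) ≤ a j + c * b j :=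
    mul_add_le_add_of_two_mul_sub_le (mul_nonneg hτ (ha (j + 1)))
      ((h j).trans_eq (by ring))
  have bound (k : ℕ) : (1 + τ) ^ k * a k ≤ a 0 + c * b 0 := calc
    (1 + τ) ^ k * a k ≤ (1 + τ) ^ k * (a k + c * b k) :=
      mul_le_mul_of_nonneg_left (le_add_of_nonneg_right (hcb k)) (pow_nonneg hτ k)
    _ ≤ (1 + τ) ^ 0 * (a 0 + c * b 0) :=
      antitone_pow_mul_of_mul_succ_le (u := fun j ↦ a j + c * b j) hτ contraction k.zero_le
    _ = a 0 + c * b 0 := by rw [pow_zero, one_mul]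
  refine ⟨bound, fun D hD k ↦ (bound k).trans ?_⟩
  rw [one_add_mul]
  gcongr

/-- Telescoping argument in the proof of Theorem 5: if
2(1+τ)a_{j+1} − a_j ≤ c(b_j − (1+τ)b_{j+1}) for all j with a, b nonnegative,
then (1+τ)^k a_k ≤ a_0 + c b_0; and if moreover c b_0 ≤ (1 + 1/(2τ)) a_0,
then (1+τ)^k a_k ≤ (2 + 1/(2τ)) a_0. -/
theorem svrg_telescoping (τ c : ℝ) (hτ : 0 < τ) (hc : 0 ≤ c) (a b : ℕ → ℝ)
    (ha : ∀ j, 0 ≤ a j) (hb : ∀ j, 0 ≤ b j)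
    (h : ∀ j, 2 * (1 + τ) * a (j + 1) - a j ≤ c * (b j - (1 + τ) * b (j + 1))) :
    (∀ k, (1 + τ) ^ k * a k ≤ a 0 + c * b 0) ∧
      (c * b 0 ≤ (1 + 1 / (2 * τ)) * a 0 →
        ∀ k, (1 + τ) ^ k * a k ≤ (2 + 1 / (2 * τ)) * a 0) := by
  obtain ⟨bound, bound_of_le⟩ :=
    svrg_telescoping_general (by positivity) ha (fun j ↦ mul_nonneg hc (hb j)) h
  exact ⟨bound, fun h0 k ↦ (bound_of_le _ h0 k).trans_eq (by ring)⟩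
end
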